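/- arXiv:1111.6246 — 2 statements merged into one kernel-verified Lean document; each statement's English description precedes it below -/
import Mathlib

section
/- Let C > 0, let μ be a finite nonnegative Borel measure on ℝ × ℝ, and for each s ∈ (0,∞) let ν_s be a finite nonnegative Borel measure on ℝ. Assume that for every s > 0, every τ with 0 < τ < s, and every Borel set B ⊆ ℝ one has ν_s(B) ≤ C·( L¹(B)/τ + μ([s−τ, s+τ]×ℝ) ). Then the set of times s ∈ (0,∞) at which ν_s is not absolutely continuous with respect to Lebesgue measure is at most countable. -/
open MeasureTheory

/-!
For a Lebesgue-null set `B` the estimate leaves `ν s B ≤ C μ([s-τ, s+τ] × ℝ)` for all small `τ`,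
and as `τ ↓ 0` the right-hand side tends to `C μ({s} × ℝ)`. So `ν s` can charge a null set only if
`s` is an atom of the time marginal of `μ`, and a finite measure has at most countably many atoms.
-/

open Filter Metric Set
open scoped ENNReal NNReal Topology

section

variable {T X : Type*} [MeasurableSpace T] [MeasurableSpace X]

theorem absolutelyContinuous_of_eventually_le_mul_add {ι : Type*} {l : Filter ι} [l.NeBot]
    {ν ρ : Measure X} {c ε : ι → ℝ≥0∞} (hε : Tendsto ε l (𝓝 0))
    (hν : ∀ B, MeasurableSet B → ∀ᶠ i in l, ν B ≤ c i * ρ B + ε i) : ν ≪ ρ := by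
  refine Measure.AbsolutelyContinuous.mk fun B hB hρB => ?_
  have hνε : ∀ᶠ i in l, ν B ≤ ε i := by simpa only [hρB, mul_zero, zero_add] using hν B hB
  exact nonpos_iff_eq_zero.1 (ge_of_tendsto hε hνε)

theorem countable_setOf_measure_singleton_ne_zero [MeasurableSingletonClass T]
    (m : Measure T) [SFinite m] : {s | m {s} ≠ 0}.Countable := by
  simpa only [pos_iff_ne_zero, id_eq, ofPred_eq_eq_singleton] using
    Measure.countable_meas_level_set_pos (μ := m) measurable_id

variable [MetricSpace T] [OpensMeasurableSpace T]

theorem tendsto_measure_closedBall_nhdsGT_zero (m : Measure T) [IsLocallyFiniteMeasure m] (s : T) :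
    Tendsto (fun τ => m (closedBall s τ)) (𝓝[>] 0) (𝓝 (m {s})) := by
  obtain ⟨U, hU, hmU⟩ := m.finiteAt_nhds s
  obtain ⟨R, hR, hRU⟩ := nhds_basis_closedBall.mem_iff.1 hU
  have hfin : m (cthickening R {s}) ≠ ∞ := by
    rw [cthickening_singleton s hR.le]
    exact measure_ne_top_of_subset hRU hmU.ne
  refine ((tendsto_measure_cthickening_of_isClosed ⟨R, hR, hfin⟩ isClosed_singleton).mono_left
    nhdsWithin_le_nhds).congr' ?_
  filter_upwards [self_mem_nhdsWithin] with τ hτ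
  rw [cthickening_singleton s (mem_Ioi.1 hτ).le]

theorem absolutelyContinuous_of_decay_estimate {m : Measure T} [IsLocallyFiniteMeasure m]
    {ν ρ : Measure X} {s : T} {C : ℝ≥0} (hs : m {s} = 0)
    (hest : ∀ B, MeasurableSet B → ∀ᶠ τ : ℝ in 𝓝[>] 0,
      ν B ≤ C * (ρ B / ENNReal.ofReal τ + m (closedBall s τ))) : ν ≪ ρ := by
  have hball : Tendsto (fun τ => C * m (closedBall s τ)) (𝓝[>] 0) (𝓝 0) := by
    simpa only [hs, mul_zero] using ENNReal.Tendsto.const_mul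
      (tendsto_measure_closedBall_nhdsGT_zero m s) (Or.inr ENNReal.coe_ne_top)
  refine absolutelyContinuous_of_eventually_le_mul_add
    (c := fun τ => C / ENNReal.ofReal τ) hball fun B hB => ?_
  filter_upwards [hest B hB] with τ hτ
  rwa [mul_add, mul_div_assoc', ENNReal.mul_div_right_comm] at hτ

theorem countable_nonAC_times_of_decay_estimate_general
    {m : Measure T} [SFinite m] [IsLocallyFiniteMeasure m] {ρ : Measure X} {ν : T → Measure X}
    {S : Set T} {C : T → ℝ≥0}
    (hest : ∀ s ∈ S, ∀ B, MeasurableSet B → ∀ᶠ τ : ℝ in 𝓝[>] 0,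
      ν s B ≤ C s * (ρ B / ENNReal.ofReal τ + m (closedBall s τ))) :
    {s | s ∈ S ∧ ¬ ν s ≪ ρ}.Countable := by
  refine (countable_setOf_measure_singleton_ne_zero m).mono ?_
  rintro s ⟨hsS, hac⟩ hs
  exact hac (absolutelyContinuous_of_decay_estimate hs (hest s hsS))

end

/-- **Countably many singular times from the decay estimate.** If each
time-slice measure `ν s` (finite for `s > 0`) satisfies
`ν s (B) ≤ C (L¹(B)/τ + μ([s−τ,s+τ]×ℝ))` for all `0 < τ < s` and Borel `B`,
with `μ` a finite nonnegative measure on the (time × space) plane, then the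
set of times `s > 0` at which `ν s` fails to be absolutely continuous with
respect to Lebesgue measure is at most countable. -/
theorem countable_nonAC_times_of_decay_estimate
    (C : ℝ) (hC : 0 < C) (μ : Measure (ℝ × ℝ)) [IsFiniteMeasure μ]
    (ν : ℝ → Measure ℝ) (hfin : ∀ s : ℝ, 0 < s → IsFiniteMeasure (ν s))
    (hest : ∀ s τ : ℝ, 0 < s → 0 < τ → τ < s → ∀ B : Set ℝ, MeasurableSet B →
      ν s B ≤ ENNReal.ofReal C *
        (volume B / ENNReal.ofReal τ +
          μ (Set.Icc (s - τ) (s + τ) ×ˢ (Set.univ : Set ℝ)))) :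
    {s : ℝ | 0 < s ∧ ¬ ν s ≪ volume}.Countable := by
  refine countable_nonAC_times_of_decay_estimate_general (m := μ.fst) (S := Ioi 0)
    (C := fun _ => C.toNNReal) fun s hs B hB => ?_
  filter_upwards [Ioo_mem_nhdsGT (mem_Ioi.1 hs)] with τ ⟨hτ, hτs⟩
  rw [Real.closedBall_eq_Icc, Measure.fst_apply measurableSet_Icc, ← prod_univ]
  exact hest s τ hs hτ hτs B hB
end

section
/- Let C > 0, let μ be a finite nonnegative Borel measure on ℝ × ℝ, let s > 0, and let ν be a finite nonnegative Borel measure on ℝ such that for every τ with 0 < τ < s and every Borel set B ⊆ ℝ one has ν(B) ≤ C·( L¹(B)/τ + μ([s−τ, s+τ]×ℝ) ). Then for every Borel set K ⊆ ℝ with L¹(K) = 0 one has μ({s}×ℝ) ≥ ν(K)/C. In particular, if ν is not absolutely continuous with respect to Lebesgue measure, the time-slice {s}×ℝ is an atom of the time marginal of μ. -/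
open MeasureTheory

/-!
On a null set `K` the term `L¹(K)/τ` vanishes for every `τ > 0`, so `ν(K)` is at most `C` times the
mass that the time marginal of `μ` gives to the closed ball of radius `τ` around `s`. As `τ ↓ 0`,
continuity from above turns that mass into the mass of `{s}`.
-/

open Filter Metric Topology
open scoped ENNReal

theorem fst_apply_eq_measure_prod_univ {X E : Type*} [MeasurableSpace X] [MeasurableSpace E]
    {μ : Measure (X × E)} {A : Set X} (hA : MeasurableSet A) : μ.fst A = μ (A ×ˢ Set.univ) := by
  rw [Measure.fst_apply hA, Set.prod_univ]

section AtomOfDecay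

variable {X E α : Type*} [MetricSpace X] [MeasurableSpace X] [OpensMeasurableSpace X]
  [MeasurableSpace E] [MeasurableSpace α]
  {m : Measure X} {x : X} {ν ρ : Measure α} {C : ℝ≥0∞}

theorem tendsto_measure_closedBall_singleton (hfin : ∃ R > 0, m (closedBall x R) ≠ ∞) :
    Tendsto (fun r ↦ m (closedBall x r)) (𝓝[>] 0) (𝓝 (m {x})) := by
  obtain ⟨R, hR, hmR⟩ := hfin
  have hlim : Tendsto (fun r ↦ m (cthickening r {x})) (𝓝[>] 0) (𝓝 (m {x})) :=
    (tendsto_measure_cthickening_of_isClosed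
      ⟨R, hR, by rwa [cthickening_singleton x hR.le]⟩ isClosed_singleton).mono_left
      nhdsWithin_le_nhds
  refine hlim.congr' ?_
  filter_upwards [self_mem_nhdsWithin] with r hr
  rw [cthickening_singleton x (le_of_lt hr)]

theorem le_mul_measure_singleton_of_frequently_le {a : ℝ≥0∞} (hC : C ≠ ∞)
    (hfin : ∃ R > 0, m (closedBall x R) ≠ ∞)
    (hle : ∃ᶠ r in 𝓝[>] 0, a ≤ C * m (closedBall x r)) :
    a ≤ C * m {x} :=
  ge_of_tendsto_of_frequently
    (ENNReal.Tendsto.const_mul (tendsto_measure_closedBall_singleton hfin) (.inr hC)) hle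

theorem measure_le_mul_of_null {K : Set α} {c t : ℝ≥0∞} (hK : ρ K = 0)
    (hest : ∀ B, MeasurableSet B → ν B ≤ C * (ρ B / t + c)) :
    ν K ≤ C * c :=
  calc
    ν K ≤ ν (toMeasurable ρ K) := measure_mono (subset_toMeasurable ρ K)
    _ ≤ C * (ρ (toMeasurable ρ K) / t + c) := hest _ (measurableSet_toMeasurable ρ K)
    _ = C * c := by rw [measure_toMeasurable, hK, ENNReal.zero_div, zero_add]

theorem null_mass_forces_time_atom_general {μ : Measure (X × E)} {s : X} (hC : C ≠ ∞)
    (hfin : ∃ R > 0, μ (closedBall s R ×ˢ Set.univ) ≠ ∞)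
    (hest : ∃ᶠ τ in 𝓝[>] (0 : ℝ), ∀ B, MeasurableSet B →
      ν B ≤ C * (ρ B / ENNReal.ofReal τ + μ (closedBall s τ ×ˢ Set.univ))) :
    (∀ K, ρ K = 0 → ν K ≤ C * μ ({s} ×ˢ Set.univ)) ∧
      (¬ ν ≪ ρ → 0 < μ ({s} ×ˢ Set.univ)) := by
  simp only [← fst_apply_eq_measure_prod_univ measurableSet_closedBall,
    ← fst_apply_eq_measure_prod_univ (measurableSet_singleton s)] at hfin hest ⊢
  have null_mass_le : ∀ K, ρ K = 0 → ν K ≤ C * μ.fst {s} := fun K hK ↦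
    le_mul_measure_singleton_of_frequently_le hC hfin
      (hest.mono fun _ ↦ measure_le_mul_of_null hK)
  refine ⟨null_mass_le, fun hν ↦ pos_iff_ne_zero.mpr fun hs ↦ hν fun K hK ↦ ?_⟩
  simpa only [hs, mul_zero, nonpos_iff_eq_zero] using null_mass_le K hK

end AtomOfDecay

/-- **Mass on a null set forces an atom of the time marginal.** If the finite
measure `ν` satisfies the decay estimate
`ν(B) ≤ C (L¹(B)/τ + μ([s−τ,s+τ]×ℝ))` for all `0 < τ < s` and Borel `B`, then
for every Borel set `K` that is Lebesgue-null one has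
`μ({s}×ℝ) ≥ ν(K)/C`; in particular, if `ν` is not absolutely continuous with
respect to Lebesgue measure, then `μ` charges the time slice `{s}×ℝ`. -/
theorem null_mass_forces_time_atom
    (C : ℝ) (hC : 0 < C) (μ : Measure (ℝ × ℝ)) [IsFiniteMeasure μ]
    (s : ℝ) (hs : 0 < s) (ν : Measure ℝ) [IsFiniteMeasure ν]
    (hest : ∀ τ : ℝ, 0 < τ → τ < s → ∀ B : Set ℝ, MeasurableSet B →
      ν B ≤ ENNReal.ofReal C *
        (volume B / ENNReal.ofReal τ +
          μ (Set.Icc (s - τ) (s + τ) ×ˢ (Set.univ : Set ℝ)))) :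
    (∀ K : Set ℝ, MeasurableSet K → volume K = 0 →
        ν K / ENNReal.ofReal C ≤ μ (({s} : Set ℝ) ×ˢ (Set.univ : Set ℝ))) ∧
    (¬ ν ≪ volume → 0 < μ (({s} : Set ℝ) ×ˢ (Set.univ : Set ℝ))) := by
  simp only [← Real.closedBall_eq_Icc] at hest
  have hest_eventually := eventually_of_mem (Ioo_mem_nhdsGT hs) fun τ hτ ↦ hest τ hτ.1 hτ.2
  obtain ⟨null_mass_le, slice_pos⟩ := null_mass_forces_time_atom_general
    ENNReal.ofReal_ne_top ⟨1, one_pos, measure_ne_top _ _⟩ hest_eventually.frequently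
  exact ⟨fun K _ hK ↦ ENNReal.div_le_of_le_mul' (null_mass_le K hK), slice_pos⟩
end
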